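/- (Balancing Lemma) Assume Σ_UID^rev and Σ_UFD are reversible. Then any finite instance I satisfying Σ_UFD has a balanced pssinstance. -/

import Mathlib

namespace FQA

/-- A relational signature: a finite set of relation names, each with an arity `≥ 1`. -/
structure Sig where
  Rel : Type
  rel_fin : Finite Rel
  ar : Rel → ℕ
  ar_pos : ∀ R, 1 ≤ ar R

/-- The positions of a signature: pairs of a relation and an index into its arity. -/
abbrev Sig.Pos (σ : Sig) : Type := Σ R : σ.Rel, Fin (σ.ar R)

/-- A fact `R(a₁, …, a_{ar R})` with elements from `α`. -/
abbrev Fact (σ : Sig) (α : Type) : Type := Σ R : σ.Rel, Fin (σ.ar R) → α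

/-- An instance is a set of facts. -/
abbrev Inst (σ : Sig) (α : Type) : Type := Set (Fact σ α)

variable {σ : Sig} {α β : Type}

/-- Element `a` occurs at position `p` in some fact of the instance `I`. -/
def occursAt (I : Inst σ α) (p : σ.Pos) (a : α) : Prop :=
  ∃ t : Fin (σ.ar p.1) → α, (⟨p.1, t⟩ : Fact σ α) ∈ I ∧ t p.2 = a

/-- The active domain of an instance: the elements occurring in some fact. -/
def activeDom (I : Inst σ α) : Set α :=
  {a | ∃ F : Fact σ α, F ∈ I ∧ ∃ i, F.2 i = a}

/-- A unary inclusion dependency `src ⊆ dst` (nontrivial: `src ≠ dst`). -/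
structure UID (σ : Sig) where
  src : σ.Pos
  dst : σ.Pos
  ne : src ≠ dst

/-- The reverse of a UID. -/
def UID.rev (τ : UID σ) : UID σ := ⟨τ.dst, τ.src, τ.ne.symm⟩

/-- An instance satisfies a UID if every element occurring at `src` also occurs at `dst`. -/
def satUID (I : Inst σ α) (τ : UID σ) : Prop :=
  ∀ a, occursAt I τ.src a → occursAt I τ.dst a

/-- A unary functional dependency `R^src → R^dst` (nontrivial: `src ≠ dst`). -/
structure UFD (σ : Sig) where
  rel : σ.Rel
  src : Fin (σ.ar rel)
  dst : Fin (σ.ar rel)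
  ne : src ≠ dst

/-- The reverse of a UFD. -/
def UFD.rev (φ : UFD σ) : UFD σ := ⟨φ.rel, φ.dst, φ.src, φ.ne.symm⟩

/-- The source position of a UFD, as a position of the signature. -/
def UFD.posSrc (φ : UFD σ) : σ.Pos := ⟨φ.rel, φ.src⟩

/-- The target position of a UFD, as a position of the signature. -/
def UFD.posDst (φ : UFD σ) : σ.Pos := ⟨φ.rel, φ.dst⟩

/-- An instance satisfies a UFD if any two facts of `rel` agreeing at `src` agree at `dst`. -/
def satUFD (I : Inst σ α) (φ : UFD σ) : Prop :=
  ∀ t u : Fin (σ.ar φ.rel) → α,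
    (⟨φ.rel, t⟩ : Fact σ α) ∈ I → (⟨φ.rel, u⟩ : Fact σ α) ∈ I →
    t φ.src = u φ.src → t φ.dst = u φ.dst

/-- `a` wants to appear at position `p` in `I` (with respect to the UIDs `Su`): some
UID of `Su` with target `p` applies to `a`, and `a` does not yet occur at `p`. -/
def wants (Su : Set (UID σ)) (I : Inst σ α) (p : σ.Pos) (a : α) : Prop :=
  (∃ τ ∈ Su, τ.dst = p ∧ occursAt I τ.src a) ∧ ¬ occursAt I p a

/-- `I` is a weakly-sound superinstance of `I₀` for the UIDs `Su`: elements of `I₀`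
only appear at positions where they already appeared or wanted to appear, and new
elements only appear at positions related by UIDs of `Su` in both directions. -/
def WeaklySound (Su : Set (UID σ)) (I₀ I : Inst σ ℕ) : Prop :=
  (∀ a ∈ activeDom I₀, ∀ p : σ.Pos, occursAt I p a →
      occursAt I₀ p a ∨ wants Su I₀ p a) ∧
  (∀ a ∈ activeDom I, a ∉ activeDom I₀ → ∀ p q : σ.Pos,
      occursAt I p a → occursAt I q a →
      p = q ∨ ∃ h : p ≠ q, (⟨p, q, h⟩ : UID σ) ∈ Su ∧ (⟨q, p, h.symm⟩ : UID σ) ∈ Su)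

/-- A set of UIDs is transitively closed. -/
def TransClosedUID (Su : Set (UID σ)) : Prop :=
  ∀ τ ∈ Su, ∀ τ' ∈ Su, τ.dst = τ'.src →
    ∀ h : τ.src ≠ τ'.dst, (⟨τ.src, τ'.dst, h⟩ : UID σ) ∈ Su

/-- A set of UFDs is closed under UFD transitivity. -/
def TransClosedUFD (Sf : Set (UFD σ)) : Prop :=
  ∀ (R : σ.Rel) (i j k : Fin (σ.ar R)) (h1 : i ≠ j) (h2 : j ≠ k) (h3 : i ≠ k),
    (⟨R, i, j, h1⟩ : UFD σ) ∈ Sf → (⟨R, j, k, h2⟩ : UFD σ) ∈ Sf →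
    (⟨R, i, k, h3⟩ : UFD σ) ∈ Sf

/-- A position occurs in some UID of `Su`. -/
def occursInUIDs (Su : Set (UID σ)) (p : σ.Pos) : Prop :=
  ∃ τ ∈ Su, τ.src = p ∨ τ.dst = p

/-- The UIDs `Su` and UFDs `Sf` are reversible: both are closed under implication
(transitivity), every UID of `Su` has its reverse in `Su`, and every UFD of `Sf`
whose two positions occur in UIDs of `Su` has its reverse in `Sf`. -/
def Reversible (Su : Set (UID σ)) (Sf : Set (UFD σ)) : Prop :=
  TransClosedUID Su ∧ TransClosedUFD Sf ∧
  (∀ τ ∈ Su, τ.rev ∈ Su) ∧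
  (∀ φ ∈ Sf, occursInUIDs Su φ.posSrc → occursInUIDs Su φ.posDst → φ.rev ∈ Sf)

/-- Positions `p` and `q` are `∼_ID`-related: equal, or the UID `p ⊆ q` is in `Su`
(under the reversibility assumption this is an equivalence relation). -/
def eqID (Su : Set (UID σ)) (p q : σ.Pos) : Prop :=
  p = q ∨ ∃ h : p ≠ q, (⟨p, q, h⟩ : UID σ) ∈ Su

/-- Wanting for a pssinstance `(I, H, lam)`: elements of `I` want to appear where
they wanted to appear in `I`, and helpers want to appear at the positions of their
assigned `∼_ID`-class. -/
def wantsP (Su : Set (UID σ)) (I : Inst σ ℕ) (H : Set ℕ) (lam : ℕ → Set σ.Pos)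
    (p : σ.Pos) (a : ℕ) : Prop :=
  wants Su I p a ∨ (a ∈ H ∧ p ∈ lam a)

/-- `(I, H, lam)` is a pssinstance of `I`: `H` is a finite set of fresh helper
elements, and `lam` maps each helper to a `∼_ID`-class of positions. -/
def IsPSS (Su : Set (UID σ)) (I : Inst σ ℕ) (H : Set ℕ) (lam : ℕ → Set σ.Pos) : Prop :=
  H.Finite ∧ Disjoint H (activeDom I) ∧
  ∀ h ∈ H, ∃ p : σ.Pos, lam h = {q | eqID Su p q}

/-- The pssinstance `(I, H, lam)` is balanced: for every two positions of a relation
related by a pair of inverse UFDs of `Sf`, equally many elements want to appear there. -/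
def BalancedPSS (Su : Set (UID σ)) (Sf : Set (UFD σ)) (I : Inst σ ℕ)
    (H : Set ℕ) (lam : ℕ → Set σ.Pos) : Prop :=
  ∀ (R : σ.Rel) (i j : Fin (σ.ar R)) (hij : i ≠ j),
    (⟨R, i, j, hij⟩ : UFD σ) ∈ Sf → (⟨R, j, i, hij.symm⟩ : UFD σ) ∈ Sf →
    {a : ℕ | wantsP Su I H lam ⟨R, i⟩ a}.ncard =
      {a : ℕ | wantsP Su I H lam ⟨R, j⟩ a}.ncard

/-! Write `N` for the number of elements of `I`. Give each `∼_ID`-class `c` as many helpers as there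
are elements of `I` that occur at no position of `c`. An element of `I` that occurs somewhere in the
class of a position `p` either occurs at `p` or wants to appear there, so with the helpers exactly
`N - |π_p(I)|` elements want to appear at `p`. Two positions determining each other by UFDs have
equally large projections in `I`, hence they are balanced. -/

theorem exists_pairwise_disjoint_finset_card_eq {ι γ : Type*} [Countable ι] [Infinite γ]
    (n : ι → ℕ) {D : Set γ} (hD : D.Finite) :
    ∃ H : ι → Finset γ, Pairwise (Function.onFun Disjoint H) ∧
      (∀ i, Disjoint (H i : Set γ) D) ∧ ∀ i, (H i).card = n i := by
  have : Infinite ↑Dᶜ := hD.infinite_compl.to_subtype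
  obtain ⟨code, hcode⟩ := exists_injective_nat (Σ i, Fin (n i))
  let fresh : (Σ i, Fin (n i)) ↪ γ :=
    (⟨code, hcode⟩ : _ ↪ ℕ).trans ((Infinite.natEmbedding ↑Dᶜ).trans (.subtype _))
  have fresh_notMem (x) : fresh x ∉ D := (Infinite.natEmbedding ↑Dᶜ (code x)).2
  refine ⟨fun i => Finset.univ.map ((Function.Embedding.sigmaMk i).trans fresh), ?_, ?_, ?_⟩
  · intro i j hij
    simp only [Function.onFun, Finset.disjoint_left, Finset.mem_map, Finset.mem_univ, true_and]
    rintro _ ⟨k, rfl⟩ ⟨l, hl⟩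
    exact hij (congrArg Sigma.fst (fresh.injective hl)).symm
  · intro i
    simp only [Set.disjoint_left, Finset.mem_coe, Finset.mem_map, Finset.mem_univ, true_and]
    rintro _ ⟨k, rfl⟩
    exact fresh_notMem _
  · intro i
    rw [Finset.card_map, Finset.card_univ, Fintype.card_fin]

section Occurrences

variable {I : Inst σ α}

theorem occursAt.mem_activeDom {p : σ.Pos} {a : α} (h : occursAt I p a) : a ∈ activeDom I := by
  obtain ⟨t, ht, hta⟩ := h
  exact ⟨⟨p.1, t⟩, ht, p.2, hta⟩

theorem finite_activeDom (hI : I.Finite) : (activeDom I).Finite := by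
  have activeDom_eq : activeDom I = ⋃ F ∈ I, Set.range F.2 := by
    ext a
    simp [activeDom]
  rw [activeDom_eq]
  exact hI.biUnion fun F _ => Set.finite_range F.2

theorem finite_setOf_occursAt (hI : I.Finite) (p : σ.Pos) : {a | occursAt I p a}.Finite :=
  (finite_activeDom hI).subset fun _ => occursAt.mem_activeDom

theorem satUFD.ncard_posDst_le_ncard_posSrc {φ : UFD σ} (hφ : satUFD I φ) (hI : I.Finite) :
    {a | occursAt I φ.posDst a}.ncard ≤ {a | occursAt I φ.posSrc a}.ncard := by
  have exists_fact : ∀ b : {a | occursAt I φ.posDst a},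
      ∃ t : Fin (σ.ar φ.rel) → α, (⟨φ.rel, t⟩ : Fact σ α) ∈ I ∧ t φ.dst = b := fun b => b.2
  choose t ht htb using exists_fact
  have : Finite {a | occursAt I φ.posSrc a} := finite_setOf_occursAt hI _
  refine Nat.card_le_card_of_injective
    (fun b => (⟨t b φ.src, t b, ht b, rfl⟩ : {a | occursAt I φ.posSrc a})) fun b c hbc => ?_
  have hsrc : t b φ.src = t c φ.src := congrArg Subtype.val hbc
  exact Subtype.ext <| calc
    (b : α) = t b φ.dst := (htb b).symm
    _ = t c φ.dst := hφ _ _ (ht b) (ht c) hsrc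
    _ = c := htb c

theorem ncard_posSrc_eq_ncard_posDst {φ : UFD σ} (hφ : satUFD I φ) (hφrev : satUFD I φ.rev)
    (hI : I.Finite) :
    {a | occursAt I φ.posSrc a}.ncard = {a | occursAt I φ.posDst a}.ncard :=
  le_antisymm (hφrev.ncard_posDst_le_ncard_posSrc hI) (hφ.ncard_posDst_le_ncard_posSrc hI)

end Occurrences

section Classes

variable {Su : Set (UID σ)}

theorem TransClosedUID.equivalence_eqID (htrans : TransClosedUID Su)
    (hrev : ∀ τ ∈ Su, τ.rev ∈ Su) : Equivalence (eqID Su) where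
  refl _ := Or.inl rfl
  symm := by
    rintro p q (rfl | ⟨hpq, hmem⟩)
    · exact Or.inl rfl
    · exact Or.inr ⟨hpq.symm, hrev _ hmem⟩
  trans := by
    rintro p q r (rfl | ⟨hpq, hmem⟩) (rfl | ⟨hqr, hmem'⟩)
    · exact Or.inl rfl
    · exact Or.inr ⟨hqr, hmem'⟩
    · exact Or.inr ⟨hpq, hmem⟩
    · exact (eq_or_ne p r).imp_right fun hpr => ⟨hpr, htrans _ hmem _ hmem' rfl hpr⟩

/-- The type of `∼_ID`-classes of positions, for `∼_ID` an equivalence relation. -/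
abbrev IDClass (hequiv : Equivalence (eqID Su)) : Type :=
  Quotient (⟨eqID Su, hequiv⟩ : Setoid σ.Pos)

/-- The `∼_ID`-class of a position. -/
abbrev idClass (hequiv : Equivalence (eqID Su)) (p : σ.Pos) : IDClass hequiv :=
  Quotient.mk _ p

variable {hequiv : Equivalence (eqID Su)}

theorem idClass_eq_iff {p q : σ.Pos} : idClass hequiv p = idClass hequiv q ↔ eqID Su p q :=
  Quotient.eq

instance : Finite (IDClass hequiv) :=
  have := σ.rel_fin
  inferInstance

/-- The elements of `I` occurring at some position of the `∼_ID`-class `c`; they are the ones that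
the UIDs require to occur at every position of `c`. -/
def classDom (I : Inst σ α) (c : IDClass hequiv) : Set α :=
  {a | ∃ p, idClass hequiv p = c ∧ occursAt I p a}

theorem classDom_subset_activeDom (I : Inst σ α) (c : IDClass hequiv) :
    classDom I c ⊆ activeDom I := by
  rintro a ⟨p, -, ha⟩
  exact ha.mem_activeDom

theorem setOf_occursAt_subset_classDom (I : Inst σ α) (p : σ.Pos) :
    {a | occursAt I p a} ⊆ classDom I (idClass hequiv p) :=
  fun _ ha => ⟨p, rfl, ha⟩

theorem setOf_wants_eq_classDom_sdiff (I : Inst σ α) (p : σ.Pos) :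
    {a | wants Su I p a} = classDom I (idClass hequiv p) \ {a | occursAt I p a} := by
  ext a
  refine and_congr_left fun hnot => ⟨?_, ?_⟩
  · rintro ⟨τ, hτ, rfl, ha⟩
    exact ⟨τ.src, idClass_eq_iff.2 (Or.inr ⟨τ.ne, hτ⟩), ha⟩
  · rintro ⟨q, hq, ha⟩
    obtain rfl | ⟨hqp, hmem⟩ := idClass_eq_iff.1 hq
    · exact absurd ha hnot
    · exact ⟨_, hmem, rfl, ha⟩

theorem ncard_wants_add_ncard_occursAt {I : Inst σ α} (hI : I.Finite) (p : σ.Pos) :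
    {a | wants Su I p a}.ncard + {a | occursAt I p a}.ncard =
      (classDom I (idClass hequiv p)).ncard := by
  rw [setOf_wants_eq_classDom_sdiff (hequiv := hequiv)]
  exact Set.ncard_sdiff_add_ncard_of_subset (setOf_occursAt_subset_classDom I p)
    ((finite_activeDom hI).subset (classDom_subset_activeDom I _))

end Classes

section Helpers

variable {Su : Set (UID σ)} {hequiv : Equivalence (eqID Su)} {I : Inst σ ℕ}
  {H : IDClass hequiv → Finset ℕ}

/-- The set of all helpers, where `H c` is the finite set of helpers assigned to the class `c`. -/
def helperSet (H : IDClass hequiv → Finset ℕ) : Set ℕ := ⋃ c, H c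

/-- The labelling `λ` of a pssinstance with helpers `H c` in each class `c`, each class being
given as its set of positions; it is meaningful when the sets `H c` are pairwise disjoint. -/
def helperLabel (H : IDClass hequiv → Finset ℕ) (h : ℕ) : Set σ.Pos :=
  {p | h ∈ H (idClass hequiv p)}

theorem helperLabel_eq_setOf_eqID (hdisj : Pairwise (Function.onFun Disjoint H)) {p : σ.Pos}
    {h : ℕ} (hh : h ∈ H (idClass hequiv p)) : helperLabel H h = {q | eqID Su p q} := by
  ext q
  constructor
  · intro hq
    by_contra hpq
    exact Finset.disjoint_left.1 (hdisj (mt idClass_eq_iff.1 hpq)) hh hq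
  · intro hpq
    change h ∈ H (idClass hequiv q)
    rwa [← idClass_eq_iff.2 hpq]

theorem isPSS_helperSet (hdisj : Pairwise (Function.onFun Disjoint H))
    (hfresh : ∀ c, Disjoint (H c : Set ℕ) (activeDom I)) :
    IsPSS Su I (helperSet H) (helperLabel H) := by
  refine ⟨Set.finite_iUnion fun c => (H c).finite_toSet, Set.disjoint_iUnion_left.2 hfresh, ?_⟩
  intro h hh
  obtain ⟨c, hc⟩ := Set.mem_iUnion.1 hh
  obtain ⟨p, rfl⟩ := Quotient.exists_rep c
  exact ⟨p, helperLabel_eq_setOf_eqID hdisj hc⟩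

theorem setOf_wantsP_helperSet (p : σ.Pos) :
    {a | wantsP Su I (helperSet H) (helperLabel H) p a} =
      {a | wants Su I p a} ∪ H (idClass hequiv p) := by
  ext a
  exact or_congr_right (and_iff_right_of_imp fun ha => Set.mem_iUnion_of_mem _ ha)

theorem ncard_wantsP_helperSet (hI : I.Finite)
    (hfresh : ∀ c, Disjoint (H c : Set ℕ) (activeDom I)) (p : σ.Pos) :
    {a | wantsP Su I (helperSet H) (helperLabel H) p a}.ncard =
      {a | wants Su I p a}.ncard + (H (idClass hequiv p)).card := by
  have wants_subset : {a | wants Su I p a} ⊆ activeDom I := by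
    rw [setOf_wants_eq_classDom_sdiff (hequiv := hequiv)]
    exact Set.sdiff_subset.trans (classDom_subset_activeDom I _)
  rw [setOf_wantsP_helperSet, Set.ncard_union_eq ((hfresh _).symm.mono_left wants_subset)
    ((finite_activeDom hI).subset wants_subset) (Finset.finite_toSet _), Set.ncard_coe_finset]

theorem ncard_wantsP_add_ncard_occursAt (hI : I.Finite)
    (hfresh : ∀ c, Disjoint (H c : Set ℕ) (activeDom I))
    (hcard : ∀ c, (H c).card = (activeDom I).ncard - (classDom I c).ncard) (p : σ.Pos) :
    {a | wantsP Su I (helperSet H) (helperLabel H) p a}.ncard + {a | occursAt I p a}.ncard =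
      (activeDom I).ncard := by
  rw [ncard_wantsP_helperSet hI hfresh, add_right_comm,
    ncard_wants_add_ncard_occursAt (hequiv := hequiv) hI, hcard]
  exact Nat.add_sub_cancel'
    (Set.ncard_le_ncard (classDom_subset_activeDom I _) (finite_activeDom hI))

end Helpers

theorem balancing_general {Su : Set (UID σ)} (hequiv : Equivalence (eqID Su)) {Sf : Set (UFD σ)}
    {I : Inst σ ℕ} (hI : I.Finite) (hsat : ∀ φ ∈ Sf, satUFD I φ) :
    ∃ (H : Set ℕ) (lam : ℕ → Set σ.Pos), IsPSS Su I H lam ∧ BalancedPSS Su Sf I H lam := by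
  obtain ⟨H, hdisj, hfresh, hcard⟩ := exists_pairwise_disjoint_finset_card_eq
    (fun c : IDClass hequiv => (activeDom I).ncard - (classDom I c).ncard) (finite_activeDom hI)
  refine ⟨helperSet H, helperLabel H, isPSS_helperSet hdisj hfresh, ?_⟩
  intro R i j hij hmem hmem_rev
  have wantsP_add_occursAt := ncard_wantsP_add_ncard_occursAt hI hfresh hcard
  have occursAt_eq : {a | occursAt I ⟨R, i⟩ a}.ncard = {a | occursAt I ⟨R, j⟩ a}.ncard :=
    ncard_posSrc_eq_ncard_posDst (hsat _ hmem) (hsat _ hmem_rev) hI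
  apply Nat.add_right_cancel (m := {a | occursAt I ⟨R, i⟩ a}.ncard)
  rw [wantsP_add_occursAt, occursAt_eq, wantsP_add_occursAt]

/-- **Balancing Lemma.** For reversible UIDs `Su` and UFDs `Sf`, any finite instance
`I` satisfying `Sf` has a balanced pssinstance. -/
theorem balancing
    {σ : Sig} (Su : Set (UID σ)) (Sf : Set (UFD σ))
    (hrev : Reversible Su Sf)
    (I : Inst σ ℕ) (hfin : I.Finite)
    (hsat : ∀ φ ∈ Sf, satUFD I φ) :
    ∃ (H : Set ℕ) (lam : ℕ → Set σ.Pos),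
      IsPSS Su I H lam ∧ BalancedPSS Su Sf I H lam := by
  obtain ⟨htrans, -, huid_rev, -⟩ := hrev
  exact balancing_general (htrans.equivalence_eqID huid_rev) hfin hsat

end FQA
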